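/- arXiv:1512.06973 — 2 statements merged into one kernel-verified Lean document; each statement's English description precedes it below -/
import Mathlib

section
/- Theorem A.2 (traction of the fundamental tensor). In the setting of the fundamental-type tensor E built from Helmholtz solutions γ_s, γ_p, for every vector n ∈ ℝ² and every point of U: T_n E = −n (∇R)^T + ((n·∇)γ_s) I + M_n[2μ E − γ_s I]. Here T_n is applied columnwise to E, i.e., (T_n E)_{·j} = (λ+μ) n (Σ_i ∂_i E_{ij}) + μ (n·∇)E_{·j} + μ (M_n E)_{·j} + μ (M_n E)_{·j} written compactly as T_n acting on each column, and M_n applied to a matrix field F has entries (M_n F)_{ij} = Σ_{l=1}^{2} (n_l ∂_i − n_i ∂_l) F_{lj}; in particular (M_n (f I))_{ij} = n_j ∂_i f − n_i ∂_j f for a scalar field f. -/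
noncomputable section

/-- Points/vectors in the plane. -/
abbrev V2 : Type := Fin 2 → ℝ

/-- Complex 2-vectors. -/
abbrev C2 : Type := Fin 2 → ℂ

/-- The rotation-by-π/2 matrix A = [[0,-1],[1,0]] (real entries). -/
def Arot : Matrix (Fin 2) (Fin 2) ℝ := !![0, -1; 1, 0]

/-- The rotation-by-π/2 matrix A = [[0,-1],[1,0]] (complex entries). -/
def ArotC : Matrix (Fin 2) (Fin 2) ℂ := !![0, -1; 1, 0]

/-- `pd i f x` is the `i`-th partial derivative of `f : ℝ² → ℂ` at `x`. -/
def pd (i : Fin 2) (f : V2 → ℂ) (x : V2) : ℂ :=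
  fderiv ℝ f x (Pi.single i 1)

/-- Directional derivative `(v·∇)f` of a scalar field along the real vector `v`. -/
def dirD (v : V2) (f : V2 → ℂ) (x : V2) : ℂ :=
  (v 0 : ℂ) * pd 0 f x + (v 1 : ℂ) * pd 1 f x


/-- The Hessian matrix of a scalar field. -/
def hess (f : V2 → ℂ) (y : V2) : Matrix (Fin 2) (Fin 2) ℂ :=
  Matrix.of fun i j => pd i (pd j f) y

/-- The fundamental-type tensor `E = (1/μ)γ_s I + (1/(ρω²)) Hess(γ_s − γ_p)`. -/
def Emat (mu rho om : ℝ) (γs γp : V2 → ℂ) (y : V2) : Matrix (Fin 2) (Fin 2) ℂ :=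
  ((mu : ℂ)⁻¹ * γs y) • (1 : Matrix (Fin 2) (Fin 2) ℂ)
    + (((rho * om ^ 2 : ℝ) : ℂ))⁻¹ • hess (fun w => γs w - γp w) y

/-- The traction operator applied columnwise to a matrix field:
`(T_n F)_{·j} = λ(Σ_i ∂_i F_{ij}) n + 2μ (n·∇)F_{·j} + μ(∂₁F_{2j} − ∂₂F_{1j})(n₂, −n₁)`. -/
def tracM (lam mu : ℝ) (n : V2) (F : V2 → Matrix (Fin 2) (Fin 2) ℂ) (x : V2) :
    Matrix (Fin 2) (Fin 2) ℂ :=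
  Matrix.of fun i j =>
    (lam : ℂ) * (∑ l : Fin 2, pd l (fun y => F y l j) x) * (n i : ℂ)
      + 2 * (mu : ℂ) * ((n 0 : ℂ) * pd 0 (fun y => F y i j) x
          + (n 1 : ℂ) * pd 1 (fun y => F y i j) x)
      + (mu : ℂ) * (pd 0 (fun y => F y 1 j) x - pd 1 (fun y => F y 0 j) x)
          * ((![n 1, -n 0] : V2) i : ℂ)

/-- The Günter derivative applied to a matrix field:
`(M_n F)_{ij} = Σ_l (n_l ∂_i − n_i ∂_l) F_{lj}`. -/
def gunterM (n : V2) (F : V2 → Matrix (Fin 2) (Fin 2) ℂ) (x : V2) :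
    Matrix (Fin 2) (Fin 2) ℂ :=
  Matrix.of fun i j =>
    ∑ l : Fin 2, ((n l : ℂ) * pd i (fun y => F y l j) x - (n i : ℂ) * pd l (fun y => F y l j) x)

open Filter Topology Matrix

/-! Every planar matrix field satisfies, with no assumption on it,
`T_n F = (λ + 2μ) n ⊗ div F − μ n^⊥ ⊗ curl F + 2μ M_n F`, where `n^⊥ = (n₂, −n₁)`.
For `F = E` the Hessian part of the curl vanishes, so `μ curl E = curl (γ_s I)`, while the Helmholtz
equations and the dispersion relations `μ k_s² = (λ + 2μ) k_p² = ρω²` collapse the divergence to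
`(λ + 2μ) div E = ∇γ_p`. Finally `M_n (γ_s I) = (n·∇γ_s) I + n^⊥ ⊗ curl (γ_s I) − n ⊗ ∇γ_s`
eliminates the curl. -/

section PartialDerivatives

variable {f g : V2 → ℂ} {x : V2}

theorem pd_eq_of_eventuallyEq (h : f =ᶠ[𝓝 x] g) (i : Fin 2) : pd i f x = pd i g x := by
  rw [pd, pd, h.fderiv_eq]

theorem pd_add (hf : DifferentiableAt ℝ f x) (hg : DifferentiableAt ℝ g x) (i : Fin 2) :
    pd i (f + g) x = pd i f x + pd i g x := by
  simp [pd, fderiv_add hf hg]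

theorem pd_sub (hf : DifferentiableAt ℝ f x) (hg : DifferentiableAt ℝ g x) (i : Fin 2) :
    pd i (f - g) x = pd i f x - pd i g x := by
  simp [pd, fderiv_sub hf hg]

theorem pd_const_smul (c : ℂ) (f : V2 → ℂ) (i : Fin 2) : pd i (c • f) = c • pd i f := by
  funext y
  simp [pd, fderiv_const_smul_field]

theorem contDiffAt_pd {m k : WithTop ℕ∞} (hf : ContDiffAt ℝ m f x) (hk : k + 1 ≤ m) (i : Fin 2) :
    ContDiffAt ℝ k (pd i f) x :=
  (hf.fderiv_right hk).clm_apply contDiffAt_const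

theorem differentiableAt_pd (hf : ContDiffAt ℝ 2 f x) (i : Fin 2) :
    DifferentiableAt ℝ (pd i f) x :=
  (contDiffAt_pd (k := 1) hf (by norm_num) i).differentiableAt (by norm_num)

theorem pd_comm (hf : ContDiffAt ℝ 2 f x) (i j : Fin 2) : pd i (pd j f) x = pd j (pd i f) x := by
  have hdiff : DifferentiableAt ℝ (fderiv ℝ f) x :=
    (hf.fderiv_right (m := 1) (by norm_num)).differentiableAt (by norm_num)
  have pd_pd (a b : Fin 2) :
      pd a (pd b f) x = fderiv ℝ (fderiv ℝ f) x (Pi.single a 1) (Pi.single b 1) := by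
    unfold pd
    simp [fderiv_clm_apply hdiff (differentiableAt_const _)]
  rw [pd_pd, pd_pd]
  exact hf.isSymmSndFDerivAt (by simp) _ _

theorem pd_pd_sub (hf : ContDiffAt ℝ 2 f x) (hg : ContDiffAt ℝ 2 g x) (i j : Fin 2) :
    pd i (pd j (f - g)) x = pd i (pd j f) x - pd i (pd j g) x := by
  have pd_sub_near : pd j (f - g) =ᶠ[𝓝 x] pd j f - pd j g := by
    filter_upwards [hf.eventually (by simp), hg.eventually (by simp)] with y hfy hgy
    exact pd_sub (hfy.differentiableAt (by simp)) (hgy.differentiableAt (by simp)) j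
  rw [pd_eq_of_eventuallyEq pd_sub_near,
    pd_sub (differentiableAt_pd hf j) (differentiableAt_pd hg j)]

end PartialDerivatives

/-- The gradient of a scalar field. -/
def grad (f : V2 → ℂ) (x : V2) : C2 := fun i => pd i f x

/-- The Laplacian `∂₁²f + ∂₂²f` of a scalar field. It is written with `pd` because Mathlib's
Laplacian lives on inner product spaces, whereas `V2` carries the sup norm. -/
def lapl (f : V2 → ℂ) (x : V2) : ℂ := pd 0 (pd 0 f) x + pd 1 (pd 1 f) x

/-- The columnwise divergence `(div F)_j = Σ_i ∂_i F_{ij}` of a matrix field. -/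
def divM (F : V2 → Matrix (Fin 2) (Fin 2) ℂ) (x : V2) : C2 :=
  fun j => ∑ i, pd i (fun y => F y i j) x

/-- The columnwise scalar curl `(curl F)_j = ∂₁F_{2j} − ∂₂F_{1j}` of a matrix field. -/
def curlM (F : V2 → Matrix (Fin 2) (Fin 2) ℂ) (x : V2) : C2 :=
  fun j => pd 0 (fun y => F y 1 j) x - pd 1 (fun y => F y 0 j) x

/-- The directional derivative `(n·∇)F` of a matrix field, taken entrywise. -/
def dirM (n : V2) (F : V2 → Matrix (Fin 2) (Fin 2) ℂ) (x : V2) : Matrix (Fin 2) (Fin 2) ℂ :=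
  of fun i j => dirD n (fun y => F y i j) x

/-- Real differentiability at a point of every entry of a matrix field. It stands in for
`DifferentiableAt`, which would require choosing one of the norms on matrices. -/
def EntrywiseDifferentiableAt (F : V2 → Matrix (Fin 2) (Fin 2) ℂ) (x : V2) : Prop :=
  ∀ i j, DifferentiableAt ℝ (fun y => F y i j) x

/-- The isotropic matrix field `f I` of a scalar field `f`. -/
def isoM (f : V2 → ℂ) (x : V2) : Matrix (Fin 2) (Fin 2) ℂ := f x • 1

/-- The clockwise rotation `n^⊥ = (n₂, −n₁)` of a vector by a right angle. -/
def perp (n : V2) : V2 := ![n 1, -n 0]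

/-- The inclusion of `ℝ²` in `ℂ²`. -/
def complexify (n : V2) : C2 := fun i => (n i : ℂ)

theorem grad_sub {f g : V2 → ℂ} {x : V2} (hf : DifferentiableAt ℝ f x)
    (hg : DifferentiableAt ℝ g x) : grad (f - g) x = grad f x - grad g x :=
  funext fun i => pd_sub hf hg i

theorem grad_const_smul (c : ℂ) (f : V2 → ℂ) (x : V2) : grad (c • f) x = c • grad f x :=
  funext fun i => congrFun (pd_const_smul c f i) x

theorem lapl_sub {f g : V2 → ℂ} {x : V2} (hf : ContDiffAt ℝ 2 f x) (hg : ContDiffAt ℝ 2 g x) :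
    lapl (f - g) x = lapl f x - lapl g x := by
  simp only [lapl, pd_pd_sub hf hg]
  ring

theorem grad_lapl_sub_of_helmholtz {f g : V2 → ℂ} {x : V2} {a b : ℂ}
    (hf : ContDiffAt ℝ 2 f x) (hg : ContDiffAt ℝ 2 g x)
    (hHf : ∀ᶠ y in 𝓝 x, lapl f y + a * f y = 0) (hHg : ∀ᶠ y in 𝓝 x, lapl g y + b * g y = 0) :
    grad (lapl (f - g)) x = b • grad g x - a • grad f x := by
  have lapl_near : lapl (f - g) =ᶠ[𝓝 x] b • g - a • f := by
    filter_upwards [hf.eventually (by simp), hg.eventually (by simp), hHf, hHg]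
      with y hfy hgy hHfy hHgy
    simp only [lapl_sub hfy hgy, Pi.sub_apply, Pi.smul_apply, smul_eq_mul]
    linear_combination hHfy - hHgy
  have hf' : DifferentiableAt ℝ f x := hf.differentiableAt (by simp)
  have hg' : DifferentiableAt ℝ g x := hg.differentiableAt (by simp)
  calc grad (lapl (f - g)) x = grad (b • g - a • f) x :=
        funext fun i => pd_eq_of_eventuallyEq lapl_near i
    _ = b • grad g x - a • grad f x := by
        rw [grad_sub (hg'.const_smul b) (hf'.const_smul a), grad_const_smul, grad_const_smul]

section MatrixFields

variable {F G : V2 → Matrix (Fin 2) (Fin 2) ℂ} {x : V2}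

theorem pd_entry_const_smul (c : ℂ) (F : V2 → Matrix (Fin 2) (Fin 2) ℂ) (x : V2)
    (i j k : Fin 2) : pd k (fun y => (c • F) y i j) x = c * pd k (fun y => F y i j) x :=
  congrFun (pd_const_smul c (fun y => F y i j) k) x

theorem EntrywiseDifferentiableAt.add (hF : EntrywiseDifferentiableAt F x)
    (hG : EntrywiseDifferentiableAt G x) : EntrywiseDifferentiableAt (F + G) x :=
  fun i j => (hF i j).add (hG i j)

theorem EntrywiseDifferentiableAt.const_smul (hF : EntrywiseDifferentiableAt F x) (c : ℂ) :
    EntrywiseDifferentiableAt (c • F) x :=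
  fun i j => (hF i j).const_smul c

theorem divM_add (hF : EntrywiseDifferentiableAt F x)
    (hG : EntrywiseDifferentiableAt G x) :
    divM (F + G) x = divM F x + divM G x := by
  funext j
  exact (Finset.sum_congr rfl fun i _ => pd_add (hF i j) (hG i j) i).trans Finset.sum_add_distrib

theorem divM_const_smul (c : ℂ) (F : V2 → Matrix (Fin 2) (Fin 2) ℂ) (x : V2) :
    divM (c • F) x = c • divM F x := by
  funext j
  simp only [divM, pd_entry_const_smul, ← Finset.mul_sum]
  rfl

theorem curlM_add (hF : EntrywiseDifferentiableAt F x)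
    (hG : EntrywiseDifferentiableAt G x) :
    curlM (F + G) x = curlM F x + curlM G x := by
  funext j
  exact (congrArg₂ _ (pd_add (hF 1 j) (hG 1 j) 0) (pd_add (hF 0 j) (hG 0 j) 1)).trans
    (add_sub_add_comm _ _ _ _)

theorem curlM_const_smul (c : ℂ) (F : V2 → Matrix (Fin 2) (Fin 2) ℂ) (x : V2) :
    curlM (c • F) x = c • curlM F x := by
  funext j
  simp only [curlM, pd_entry_const_smul, ← mul_sub]
  rfl

theorem gunterM_sub (n : V2) (hF : EntrywiseDifferentiableAt F x)
    (hG : EntrywiseDifferentiableAt G x) :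
    gunterM n (F - G) x = gunterM n F x - gunterM n G x := by
  have pd_entry_sub (i j k : Fin 2) : pd k (fun y => (F - G) y i j) x =
      pd k (fun y => F y i j) x - pd k (fun y => G y i j) x := pd_sub (hF i j) (hG i j) k
  ext i j
  simp only [gunterM, pd_entry_sub, of_apply, Matrix.sub_apply, Fin.sum_univ_two]
  ring

theorem gunterM_const_smul (n : V2) (c : ℂ) (F : V2 → Matrix (Fin 2) (Fin 2) ℂ) (x : V2) :
    gunterM n (c • F) x = c • gunterM n F x := by
  ext i j
  simp only [gunterM, pd_entry_const_smul, of_apply, Matrix.smul_apply, smul_eq_mul,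
    Fin.sum_univ_two]
  ring

theorem gunterM_eq_dirM_add_curlM_sub_divM (n : V2) (F : V2 → Matrix (Fin 2) (Fin 2) ℂ) (x : V2) :
    gunterM n F x = dirM n F x + vecMulVec (complexify (perp n)) (curlM F x)
      - vecMulVec (complexify n) (divM F x) := by
  ext i j
  fin_cases i <;>
  · simp [gunterM, dirM, dirD, divM, curlM, perp, complexify, vecMulVec_apply]
    ring

theorem tracM_eq_dirM_add_curlM_add_divM (lam mu : ℝ) (n : V2)
    (F : V2 → Matrix (Fin 2) (Fin 2) ℂ) (x : V2) :
    tracM lam mu n F x = (lam : ℂ) • vecMulVec (complexify n) (divM F x)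
      + (2 * mu : ℂ) • dirM n F x + (mu : ℂ) • vecMulVec (complexify (perp n)) (curlM F x) := by
  ext i j
  simp only [tracM, dirM, dirD, divM, curlM, perp, complexify, vecMulVec_apply, of_apply,
    Matrix.add_apply, Matrix.smul_apply, smul_eq_mul]
  ring

theorem tracM_eq_divM_sub_curlM_add_gunterM (lam mu : ℝ) (n : V2)
    (F : V2 → Matrix (Fin 2) (Fin 2) ℂ) (x : V2) :
    tracM lam mu n F x = vecMulVec (complexify n) ((lam + 2 * mu : ℂ) • divM F x)
      - vecMulVec (complexify (perp n)) ((mu : ℂ) • curlM F x)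
      + (2 * mu : ℂ) • gunterM n F x := by
  rw [tracM_eq_dirM_add_curlM_add_divM, gunterM_eq_dirM_add_curlM_sub_divM, vecMulVec_smul,
    vecMulVec_smul]
  module

end MatrixFields

section IsotropicFields

variable (f : V2 → ℂ) (x : V2)

theorem isoM_entry_eq_smul (i j : Fin 2) :
    (fun y => isoM f y i j) = (1 : Matrix (Fin 2) (Fin 2) ℂ) i j • f := by
  funext y
  simp [isoM, mul_comm]

theorem pd_isoM (i j k : Fin 2) :
    pd k (fun y => isoM f y i j) x = (1 : Matrix (Fin 2) (Fin 2) ℂ) i j * pd k f x := by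
  rw [isoM_entry_eq_smul, pd_const_smul, Pi.smul_apply, smul_eq_mul]

variable {f x} in
theorem entrywiseDifferentiableAt_isoM (hf : DifferentiableAt ℝ f x) :
    EntrywiseDifferentiableAt (isoM f) x := by
  intro i j
  rw [isoM_entry_eq_smul]
  exact hf.const_smul _

theorem divM_isoM : divM (isoM f) x = grad f x := by
  funext j
  simp [divM, grad, pd_isoM, one_apply]

theorem dirM_isoM (n : V2) :
    dirM n (isoM f) x = dirD n f x • (1 : Matrix (Fin 2) (Fin 2) ℂ) := by
  ext i j
  simp only [dirM, dirD, pd_isoM, of_apply, Matrix.smul_apply, smul_eq_mul]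
  ring

theorem gunterM_isoM (n : V2) :
    gunterM n (isoM f) x = dirD n f x • (1 : Matrix (Fin 2) (Fin 2) ℂ)
      + vecMulVec (complexify (perp n)) (curlM (isoM f) x)
      - vecMulVec (complexify n) (grad f x) := by
  rw [gunterM_eq_dirM_add_curlM_sub_divM, dirM_isoM, divM_isoM]

end IsotropicFields

section Hessian

variable {g : V2 → ℂ} {x : V2}

theorem entrywiseDifferentiableAt_hess (hg : ContDiffAt ℝ 3 g x) :
    EntrywiseDifferentiableAt (hess g) x :=
  fun i j => differentiableAt_pd (contDiffAt_pd hg (by norm_num) j) i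

theorem divM_hess (hg : ContDiffAt ℝ 3 g x) : divM (hess g) x = grad (lapl g) x := by
  funext j
  have pd_comm_near (i : Fin 2) : pd i (pd j g) =ᶠ[𝓝 x] pd j (pd i g) := by
    filter_upwards [hg.eventually (by simp)] with y hy
    exact pd_comm (hy.of_le (by norm_num)) i j
  have pd_rotate (i : Fin 2) : pd i (pd i (pd j g)) x = pd j (pd i (pd i g)) x := by
    rw [pd_eq_of_eventuallyEq (pd_comm_near i), pd_comm (contDiffAt_pd hg (by norm_num) i)]
  calc divM (hess g) x j = pd 0 (pd 0 (pd j g)) x + pd 1 (pd 1 (pd j g)) x := Fin.sum_univ_two _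
    _ = pd j (pd 0 (pd 0 g)) x + pd j (pd 1 (pd 1 g)) x := by rw [pd_rotate, pd_rotate]
    _ = grad (lapl g) x j :=
      (pd_add (entrywiseDifferentiableAt_hess hg 0 0)
        (entrywiseDifferentiableAt_hess hg 1 1) j).symm

theorem curlM_hess (hg : ContDiffAt ℝ 3 g x) : curlM (hess g) x = 0 :=
  funext fun j => sub_eq_zero.2 (pd_comm (contDiffAt_pd hg (by norm_num) j) 0 1)

end Hessian

theorem mul_sq_mul_sqrt_div {a b : ℝ} (ha : 0 < a) (hb : 0 ≤ b) (c : ℝ) :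
    a * (c * √(b / a)) ^ 2 = b * c ^ 2 := by
  rw [mul_pow, Real.sq_sqrt (by positivity)]
  field_simp

section FundamentalTensor

variable {lam mu rho om : ℝ} {ks kp : ℂ} {γs γp : V2 → ℂ} {x : V2}

theorem Emat_eq_isoM_add_hess (mu rho om : ℝ) (γs γp : V2 → ℂ) :
    Emat mu rho om γs γp =
      (mu : ℂ)⁻¹ • isoM γs + ((rho * om ^ 2 : ℝ) : ℂ)⁻¹ • hess (γs - γp) := by
  funext y
  simp only [Emat, mul_smul]
  rfl

theorem entrywiseDifferentiableAt_Emat (hγs : ContDiffAt ℝ 3 γs x) (hγp : ContDiffAt ℝ 3 γp x) :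
    EntrywiseDifferentiableAt (Emat mu rho om γs γp) x := by
  rw [Emat_eq_isoM_add_hess]
  exact ((entrywiseDifferentiableAt_isoM (hγs.differentiableAt (by simp))).const_smul _).add
    ((entrywiseDifferentiableAt_hess (hγs.sub hγp)).const_smul _)

theorem divM_Emat (hρω : rho * om ^ 2 ≠ 0)
    (hks : mu * ks ^ 2 = (rho * om ^ 2 : ℝ)) (hkp : (lam + 2 * mu) * kp ^ 2 = (rho * om ^ 2 : ℝ))
    (hγs : ContDiffAt ℝ 3 γs x) (hγp : ContDiffAt ℝ 3 γp x)
    (hHs : ∀ᶠ y in 𝓝 x, lapl γs y + ks ^ 2 * γs y = 0)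
    (hHp : ∀ᶠ y in 𝓝 x, lapl γp y + kp ^ 2 * γp y = 0) :
    (lam + 2 * mu : ℂ) • divM (Emat mu rho om γs γp) x = grad γp x := by
  have hρω' : ((rho * om ^ 2 : ℝ) : ℂ) ≠ 0 := Complex.ofReal_ne_zero.2 hρω
  have ks_sq_ne_zero : ks ^ 2 ≠ 0 := right_ne_zero_of_mul (hks ▸ hρω')
  have inv_mul_ks_sq : ((rho * om ^ 2 : ℝ) : ℂ)⁻¹ * ks ^ 2 = (mu : ℂ)⁻¹ := by
    rw [← hks, mul_inv, inv_mul_cancel_right₀ ks_sq_ne_zero]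
  have inv_mul_kp_sq : (lam + 2 * mu : ℂ) * (((rho * om ^ 2 : ℝ) : ℂ)⁻¹ * kp ^ 2) = 1 := by
    rw [mul_left_comm, hkp, inv_mul_cancel₀ hρω']
  have hR : ContDiffAt ℝ 3 (γs - γp) x := hγs.sub hγp
  have divM_eq : divM (Emat mu rho om γs γp) x =
      (((rho * om ^ 2 : ℝ) : ℂ)⁻¹ * kp ^ 2) • grad γp x := by
    rw [Emat_eq_isoM_add_hess,
      divM_add ((entrywiseDifferentiableAt_isoM (hγs.differentiableAt (by simp))).const_smul _)
        ((entrywiseDifferentiableAt_hess hR).const_smul _),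
      divM_const_smul, divM_const_smul, divM_isoM, divM_hess hR,
      grad_lapl_sub_of_helmholtz (hγs.of_le (by norm_num)) (hγp.of_le (by norm_num)) hHs hHp,
      ← inv_mul_ks_sq]
    module
  rw [divM_eq, smul_smul, inv_mul_kp_sq, one_smul]

theorem curlM_Emat (hmu : mu ≠ 0) (hγs : ContDiffAt ℝ 3 γs x) (hγp : ContDiffAt ℝ 3 γp x) :
    (mu : ℂ) • curlM (Emat mu rho om γs γp) x = curlM (isoM γs) x := by
  have hR : ContDiffAt ℝ 3 (γs - γp) x := hγs.sub hγp
  rw [Emat_eq_isoM_add_hess,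
    curlM_add ((entrywiseDifferentiableAt_isoM (hγs.differentiableAt (by simp))).const_smul _)
      ((entrywiseDifferentiableAt_hess hR).const_smul _),
    curlM_const_smul, curlM_const_smul, curlM_hess hR, smul_zero, add_zero,
    smul_inv_smul₀ (Complex.ofReal_ne_zero.2 hmu)]

theorem traction_of_fundamental_tensor_general (hρω : rho * om ^ 2 ≠ 0)
    (hks : mu * ks ^ 2 = (rho * om ^ 2 : ℝ)) (hkp : (lam + 2 * mu) * kp ^ 2 = (rho * om ^ 2 : ℝ))
    (hγs : ContDiffAt ℝ 3 γs x) (hγp : ContDiffAt ℝ 3 γp x)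
    (hHs : ∀ᶠ y in 𝓝 x, lapl γs y + ks ^ 2 * γs y = 0)
    (hHp : ∀ᶠ y in 𝓝 x, lapl γp y + kp ^ 2 * γp y = 0) (n : V2) :
    tracM lam mu n (Emat mu rho om γs γp) x =
      -vecMulVec (complexify n) (grad (γs - γp) x)
        + dirD n γs x • (1 : Matrix (Fin 2) (Fin 2) ℂ)
        + gunterM n ((2 * mu : ℂ) • Emat mu rho om γs γp - isoM γs) x := by
  have hmu : mu ≠ 0 := by
    rintro rfl
    exact hρω (by simpa using hks.symm)
  have dγs : DifferentiableAt ℝ γs x := hγs.differentiableAt (by simp)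
  have dγp : DifferentiableAt ℝ γp x := hγp.differentiableAt (by simp)
  rw [tracM_eq_divM_sub_curlM_add_gunterM, divM_Emat hρω hks hkp hγs hγp hHs hHp,
    curlM_Emat hmu hγs hγp,
    gunterM_sub n ((entrywiseDifferentiableAt_Emat hγs hγp).const_smul _)
      (entrywiseDifferentiableAt_isoM dγs),
    gunterM_const_smul, gunterM_isoM, grad_sub dγs dγp, vecMulVec_sub]
  abel

end FundamentalTensor

/-- Theorem A.2 (traction of the fundamental tensor):
`T_n E = −n (∇R)^T + ((n·∇)γ_s) I + M_n[2μ E − γ_s I]` on `U`. -/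
theorem traction_of_fundamental_tensor (lam mu rho om ks kp : ℝ)
    (hmu : 0 < mu) (hlm : 0 < lam + mu) (hrho : 0 < rho) (hom : 0 < om)
    (hks : ks = om * Real.sqrt (rho / mu)) (hkp : kp = om * Real.sqrt (rho / (lam + 2 * mu)))
    (U : Set V2) (hU : IsOpen U) (γs γp : V2 → ℂ)
    (hγs : ContDiffOn ℝ 3 γs U) (hγp : ContDiffOn ℝ 3 γp U)
    (hHs : ∀ y ∈ U, pd 0 (pd 0 γs) y + pd 1 (pd 1 γs) y + (ks : ℂ) ^ 2 * γs y = 0)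
    (hHp : ∀ y ∈ U, pd 0 (pd 0 γp) y + pd 1 (pd 1 γp) y + (kp : ℂ) ^ 2 * γp y = 0) :
    ∀ x ∈ U, ∀ (n : V2), ∀ i j : Fin 2,
      tracM lam mu n (Emat mu rho om γs γp) x i j
        = -(n i : ℂ) * pd j (fun w => γs w - γp w) x
          + (if i = j then (n 0 : ℂ) * pd 0 γs x + (n 1 : ℂ) * pd 1 γs x else 0)
          + gunterM n (fun y => (2 * (mu : ℂ)) • Emat mu rho om γs γp y
              - γs y • (1 : Matrix (Fin 2) (Fin 2) ℂ)) x i j := by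
  intro x hx n i j
  have hks' : (mu : ℂ) * (ks : ℂ) ^ 2 = (rho * om ^ 2 : ℝ) := by
    exact_mod_cast hks ▸ mul_sq_mul_sqrt_div hmu hrho.le om
  have hkp' : ((lam : ℂ) + 2 * mu) * (kp : ℂ) ^ 2 = (rho * om ^ 2 : ℝ) := by
    exact_mod_cast hkp ▸ mul_sq_mul_sqrt_div (by linarith) hrho.le om
  have htrac := traction_of_fundamental_tensor_general (by positivity) hks' hkp'
    (hγs.contDiffAt (hU.mem_nhds hx)) (hγp.contDiffAt (hU.mem_nhds hx))
    (eventually_of_mem (hU.mem_nhds hx) hHs) (eventually_of_mem (hU.mem_nhds hx) hHp) n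
  simpa [complexify, grad, dirD, isoM, Pi.sub_def, Pi.smul_def, vecMulVec_apply, one_apply]
    using congrFun₂ htrac i j

end
end

section
/- Antisymmetrized Günter identity for the kernel R (pointwise identity underlying the g₁-term of the W_s regularization). In the setting of the fundamental-type tensor E built from Helmholtz solutions γ_s, γ_p, with H = Hess R, for all vectors m, n ∈ ℝ² and at every point of U: ((ΔR) m − H m) n^T − ((ΔR) n − H n) m^T = μ k_s² (m·(A n)) · A (E − (1/μ) γ_s I), where v w^T denotes the 2×2 outer product of vectors v, w and A = [[0,−1],[1,0]]. -/
noncomputable section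

/-!
In dimension two, `(tr H) I - H` is the adjugate of `H` and `m nᵀ - n mᵀ = (m · A n) A`, so the
left-hand side is `(m · A n) adj(H) A = (m · A n) A Hᵀ`, for an arbitrary `2 × 2` matrix `H`.
A Hessian is symmetric, and `μ k_s² = ρ ω²` cancels the factor `1/(ρ ω²)` in `E - (1/μ) γ_s I`.
-/

section TwoByTwo

open scoped Matrix

variable {R : Type*} [CommRing R]

theorem trace_smul_one_sub_eq_adjugate (H : Matrix (Fin 2) (Fin 2) R) :
    H.trace • (1 : Matrix (Fin 2) (Fin 2) R) - H = H.adjugate := by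
  rw [Matrix.adjugate_fin_two, Matrix.trace_fin_two]
  ext i j
  fin_cases i <;> fin_cases j <;> simp

theorem vecMulVec_sub_vecMulVec_swap (m n : Fin 2 → R) :
    Matrix.vecMulVec m n - Matrix.vecMulVec n m =
      (m ⬝ᵥ !![0, -1; 1, 0] *ᵥ n) • !![0, -1; 1, 0] := by
  ext i j
  fin_cases i <;> fin_cases j <;>
    simp [Matrix.vecMulVec_apply, dotProduct, Matrix.mulVec, Fin.sum_univ_two] <;> ring

theorem adjugate_mul_rotation (H : Matrix (Fin 2) (Fin 2) R) :
    H.adjugate * !![0, -1; 1, 0] = !![0, -1; 1, 0] * Hᵀ := by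
  rw [Matrix.adjugate_fin_two]
  ext i j
  fin_cases i <;> fin_cases j <;> simp [Matrix.mul_apply, Fin.sum_univ_two]

theorem vecMulVec_trace_smul_sub_mulVec_antisymm (H : Matrix (Fin 2) (Fin 2) R)
    (m n : Fin 2 → R) :
    Matrix.vecMulVec (H.trace • m - H *ᵥ m) n - Matrix.vecMulVec (H.trace • n - H *ᵥ n) m =
      (m ⬝ᵥ !![0, -1; 1, 0] *ᵥ n) • (!![0, -1; 1, 0] * Hᵀ) := by
  have adjugate_mulVec (v : Fin 2 → R) : H.trace • v - H *ᵥ v = H.adjugate *ᵥ v := by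
    rw [← trace_smul_one_sub_eq_adjugate, Matrix.sub_mulVec, Matrix.smul_mulVec,
      Matrix.one_mulVec]
  calc
    _ = H.adjugate * (Matrix.vecMulVec m n - Matrix.vecMulVec n m) := by
      rw [adjugate_mulVec, adjugate_mulVec, mul_sub, Matrix.mul_vecMulVec, Matrix.mul_vecMulVec]
    _ = _ := by
      rw [vecMulVec_sub_vecMulVec_swap, Matrix.mul_smul, adjugate_mul_rotation]

end TwoByTwo

section Hessian

open scoped Matrix

variable {f : V2 → ℂ} {x : V2}

theorem pd_pd_eq_fderiv_fderiv (hf : DifferentiableAt ℝ (fderiv ℝ f) x) (i j : Fin 2) :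
    pd i (pd j f) x = fderiv ℝ (fderiv ℝ f) x (Pi.single i 1) (Pi.single j 1) := by
  change fderiv ℝ (fun y => fderiv ℝ f y (Pi.single j 1)) x (Pi.single i 1) = _
  simp [fderiv_clm_apply hf (differentiableAt_const _)]

theorem isSymm_hess (hf : ContDiffAt ℝ 2 f x) : (hess f x).IsSymm := by
  have hf' : DifferentiableAt ℝ (fderiv ℝ f) x :=
    (hf.fderiv_right (m := 1) (by norm_num)).differentiableAt (by norm_num)
  refine Matrix.IsSymm.ext fun i j => ?_
  change pd j (pd i f) x = pd i (pd j f) x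
  rw [pd_pd_eq_fderiv_fderiv hf', pd_pd_eq_fderiv_fderiv hf']
  exact hf.isSymmSndFDerivAt (by simp) _ _

theorem trace_hess (f : V2 → ℂ) (x : V2) :
    (hess f x).trace = pd 0 (pd 0 f) x + pd 1 (pd 1 f) x :=
  Matrix.trace_fin_two _

theorem gunter_identity_hess (hf : ContDiffAt ℝ 2 f x) (m n : C2) :
    Matrix.vecMulVec ((pd 0 (pd 0 f) x + pd 1 (pd 1 f) x) • m - hess f x *ᵥ m) n
        - Matrix.vecMulVec ((pd 0 (pd 0 f) x + pd 1 (pd 1 f) x) • n - hess f x *ᵥ n) m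
      = (m ⬝ᵥ ArotC *ᵥ n) • (ArotC * hess f x) := by
  rw [← trace_hess, vecMulVec_trace_smul_sub_mulVec_antisymm, (isSymm_hess hf).eq, ArotC]

end Hessian

theorem mul_shear_waveNumber_sq {mu rho : ℝ} (hmu : 0 < mu) (hrho : 0 ≤ rho) (om : ℝ) :
    mu * (om * Real.sqrt (rho / mu)) ^ 2 = rho * om ^ 2 := by
  rw [mul_pow, Real.sq_sqrt (by positivity)]
  field_simp

theorem Emat_sub_smul_one (mu rho om : ℝ) (γs γp : V2 → ℂ) (x : V2) :
    Emat mu rho om γs γp x - ((mu : ℂ)⁻¹ * γs x) • (1 : Matrix (Fin 2) (Fin 2) ℂ)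
      = ((rho * om ^ 2 : ℝ) : ℂ)⁻¹ • hess (fun w => γs w - γp w) x :=
  add_sub_cancel_left _ _

theorem ofReal_dotProduct_Arot_mulVec (m n : V2) :
    ((m 0 * (Arot.mulVec n) 0 + m 1 * (Arot.mulVec n) 1 : ℝ) : ℂ)
      = (fun i => (m i : ℂ)) ⬝ᵥ ArotC.mulVec (fun i => (n i : ℂ)) := by
  simp [Arot, ArotC, dotProduct, Matrix.mulVec, Fin.sum_univ_two]

theorem antisymmetrized_gunter_identity_general {mu rho om ks : ℝ}
    (hmu : 0 < mu) (hrho : 0 < rho) (hom : om ≠ 0) (hks : ks = om * Real.sqrt (rho / mu))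
    {γs γp : V2 → ℂ} {x : V2} (hR : ContDiffAt ℝ 2 (fun w => γs w - γp w) x) (m n : C2) :
    Matrix.vecMulVec
        ((pd 0 (pd 0 (fun w => γs w - γp w)) x + pd 1 (pd 1 (fun w => γs w - γp w)) x) • m
          - (hess (fun w => γs w - γp w) x).mulVec m) n
      - Matrix.vecMulVec
        ((pd 0 (pd 0 (fun w => γs w - γp w)) x + pd 1 (pd 1 (fun w => γs w - γp w)) x) • n
          - (hess (fun w => γs w - γp w) x).mulVec n) m
      = (((mu * ks ^ 2 : ℝ) : ℂ) * (m ⬝ᵥ ArotC.mulVec n))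
          • (ArotC * (Emat mu rho om γs γp x
              - ((mu : ℂ)⁻¹ * γs x) • (1 : Matrix (Fin 2) (Fin 2) ℂ))) := by
  have hρω : ((rho * om ^ 2 : ℝ) : ℂ) ≠ 0 := by
    exact_mod_cast mul_ne_zero hrho.ne' (pow_ne_zero 2 hom)
  rw [gunter_identity_hess hR, Emat_sub_smul_one, hks, mul_shear_waveNumber_sq hmu hrho.le,
    Matrix.mul_smul, smul_smul, mul_right_comm, mul_inv_cancel₀ hρω, one_mul]

/-- Antisymmetrized Günter identity for the kernel `R = γ_s − γ_p`: with `H = Hess R`,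
`((ΔR) m − H m) n^T − ((ΔR) n − H n) m^T = μ k_s² (m·(A n)) A (E − (1/μ) γ_s I)` on `U`. -/
theorem antisymmetrized_gunter_identity (lam mu rho om ks kp : ℝ)
    (hmu : 0 < mu) (hlm : 0 < lam + mu) (hrho : 0 < rho) (hom : 0 < om)
    (hks : ks = om * Real.sqrt (rho / mu)) (hkp : kp = om * Real.sqrt (rho / (lam + 2 * mu)))
    (U : Set V2) (hU : IsOpen U) (γs γp : V2 → ℂ)
    (hγs : ContDiffOn ℝ 3 γs U) (hγp : ContDiffOn ℝ 3 γp U)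
    (hHs : ∀ y ∈ U, pd 0 (pd 0 γs) y + pd 1 (pd 1 γs) y + (ks : ℂ) ^ 2 * γs y = 0)
    (hHp : ∀ y ∈ U, pd 0 (pd 0 γp) y + pd 1 (pd 1 γp) y + (kp : ℂ) ^ 2 * γp y = 0) :
    ∀ x ∈ U, ∀ m n : V2,
      Matrix.vecMulVec
          ((pd 0 (pd 0 (fun w => γs w - γp w)) x + pd 1 (pd 1 (fun w => γs w - γp w)) x)
              • (fun i => (m i : ℂ))
            - (hess (fun w => γs w - γp w) x).mulVec (fun i => (m i : ℂ)))
          (fun i => (n i : ℂ))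
        - Matrix.vecMulVec
          ((pd 0 (pd 0 (fun w => γs w - γp w)) x + pd 1 (pd 1 (fun w => γs w - γp w)) x)
              • (fun i => (n i : ℂ))
            - (hess (fun w => γs w - γp w) x).mulVec (fun i => (n i : ℂ)))
          (fun i => (m i : ℂ))
        = ((mu * ks ^ 2 * (m 0 * (Arot.mulVec n) 0 + m 1 * (Arot.mulVec n) 1) : ℝ) : ℂ)
            • (ArotC * (Emat mu rho om γs γp x
                - ((mu : ℂ)⁻¹ * γs x) • (1 : Matrix (Fin 2) (Fin 2) ℂ))) := by
  intro x hx m n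
  have hR : ContDiffAt ℝ 2 (fun w => γs w - γp w) x :=
    ((hγs.sub hγp).contDiffAt (hU.mem_nhds hx)).of_le (by norm_num)
  rw [Complex.ofReal_mul, ofReal_dotProduct_Arot_mulVec]
  exact antisymmetrized_gunter_identity_general hmu hrho hom.ne' hks hR _ _

end
end
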